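/- There exists a universal constant C > 0 such that the following holds. Let n ≥ 1, d ≥ 1, let P be a polynomial of degree at most d on {-1,1}^n, let X be uniformly distributed on {-1,1}^n, let r ≥ 1, let a_r and a_{r+1} be e^{-r}- and e^{-(r+1)}-quantiles of P(X) with a_{r+1} > a_r, let U = {x ∈ {-1,1}^n : P(x) > a_r} with ε = #U / 2^n, and set h(x) = max(P(x) - a_r, 0). Then E[h^2(X)] · |log ε| ≤ ε · C^d · max{1, (|log ε| / d)^{d-1}} · E|P(X)|^2. -/

import Mathlib

open Classical

/-- Expectation with respect to the uniform measure on the discrete cube `{-1,1}^n`,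
encoded as `Fin n → Bool` (`true ↦ 1`, `false ↦ -1`). -/
noncomputable def cubeE (n : ℕ) (f : (Fin n → Bool) → ℝ) : ℝ :=
  (∑ x : Fin n → Bool, f x) / 2 ^ n

/-- The real value of a coordinate of the cube: `true ↦ 1`, `false ↦ -1`. -/
def cubeSign (b : Bool) : ℝ := if b then 1 else -1

/-- `P` is (the restriction to the cube of) a multilinear polynomial of degree at most `d`:
`P x = ∑_{#S ≤ d} a_S ∏_{i ∈ S} x_i`. -/
def IsPolyDeg (n d : ℕ) (P : (Fin n → Bool) → ℝ) : Prop :=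
  ∃ a : Finset (Fin n) → ℝ,
    (∀ S : Finset (Fin n), d < S.card → a S = 0) ∧
    ∀ x, P x = ∑ S : Finset (Fin n), a S * ∏ i ∈ S, cubeSign (x i)

/-- Probability (uniform measure) of a set of points of the cube. -/
noncomputable def cubePr (n : ℕ) (A : Set (Fin n → Bool)) : ℝ :=
  (∑ x : Fin n → Bool, if x ∈ A then (1 : ℝ) else 0) / 2 ^ n

/-- `a` is an `e^{-r}`-quantile of `P(X)`:
`ℙ(P(X) ≥ a) ≥ e^{-r}` and `ℙ(P(X) ≤ a) ≥ 1 - e^{-r}`. -/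
def IsQuantile (n : ℕ) (P : (Fin n → Bool) → ℝ) (r a : ℝ) : Prop :=
  Real.exp (-r) ≤ cubePr n {x | a ≤ P x} ∧ 1 - Real.exp (-r) ≤ cubePr n {x | P x ≤ a}

/-- Discrete partial derivative: `∂_i f(x) = (f(T_i^1 x) - f(T_i^{-1} x))/2`. -/
noncomputable def discDeriv (n : ℕ) (f : (Fin n → Bool) → ℝ) (i : Fin n)
    (x : Fin n → Bool) : ℝ :=
  (f (Function.update x i true) - f (Function.update x i false)) / 2

/-- Squared norm of the discrete gradient: `|∇f(x)|² = ∑_i |∂_i f(x)|²`. -/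
noncomputable def gradSq (n : ℕ) (f : (Fin n → Bool) → ℝ) (x : Fin n → Bool) : ℝ :=
  ∑ i : Fin n, (discDeriv n f i x) ^ 2

/-!
The truncation `h = max (P - a) 0` is supported on `U = {P > a}`, so Jensen's inequality for
`t ↦ t log t` on `U` gives `𝔼 h² · |log ε| ≤ Ent(h²)`, and the logarithmic Sobolev inequality on
the cube gives `Ent(h²) ≤ 4 𝔼 |∇h|²`. Since `h` is a contraction of `P` that vanishes off `U`, and
`∂ᵢP(x)` does not depend on `xᵢ`, the right-hand side is at most `8 𝔼 (1_U |∇P|²)`. Finally,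
Hölder's inequality with exponent `k + 1`, where `k = ⌊|log ε| / d⌋`, bounds the average of
`(∂ᵢP)²` over `U` by `e^d ‖∂ᵢP‖²_{2k+2}`, and hypercontractivity bounds `‖∂ᵢP‖²_{2k+2}` by the sum
of the squared Walsh coefficients of `∂ᵢP` with weights `(2k + 1)^{#S}`. As `∂ᵢP` has degree at
most `d - 1`, summing over `i` yields `e^d · d (2k + 1)^{d-1} 𝔼 P²`.
-/

open scoped BigOperators

section Average

open Finset

variable {α : Type*}

theorem map_expect_le_of_convexOn {K : Set ℝ} {φ : ℝ → ℝ} (hφ : ConvexOn ℝ K φ) {U : Finset α}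
    (hU : U.Nonempty) {f : α → ℝ} (hf : ∀ x ∈ U, f x ∈ K) :
    φ (𝔼 x ∈ U, f x) ≤ 𝔼 x ∈ U, φ (f x) := by
  have hcard : (#U : ℝ) ≠ 0 := mod_cast hU.card_ne_zero
  have hjensen := hφ.map_sum_le (w := fun _ => (#U : ℝ)⁻¹) (fun _ _ => by positivity)
    (by simp [hcard]) hf
  simpa only [smul_eq_mul, inv_mul_eq_div, ← sum_div, ← expect_eq_sum_div_card] using hjensen

theorem expect_add_rpow_rpow_inv_le {s : Finset α} {f g : α → ℝ} {p : ℝ} (hp : 1 ≤ p)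
    (hf : ∀ x ∈ s, 0 ≤ f x) (hg : ∀ x ∈ s, 0 ≤ g x) :
    (𝔼 x ∈ s, (f x + g x) ^ p) ^ p⁻¹ ≤ (𝔼 x ∈ s, f x ^ p) ^ p⁻¹ + (𝔼 x ∈ s, g x ^ p) ^ p⁻¹ := by
  have hsum {h : α → ℝ} (hh : ∀ x ∈ s, 0 ≤ h x) : 0 ≤ ∑ x ∈ s, h x ^ p :=
    sum_nonneg fun x hx => Real.rpow_nonneg (hh x hx) p
  simp only [expect_eq_sum_div_card]
  rw [Real.div_rpow (hsum fun x hx => add_nonneg (hf x hx) (hg x hx)) (by positivity),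
    Real.div_rpow (hsum hf) (by positivity), Real.div_rpow (hsum hg) (by positivity), ← add_div]
  gcongr
  simpa only [one_div] using Real.Lp_add_le_of_nonneg s hp hf hg

theorem expect_add_pow_le_add_pow {s : Finset α} {f g : α → ℝ} {m : ℕ} (hm : m ≠ 0)
    (hf : ∀ x ∈ s, 0 ≤ f x) (hg : ∀ x ∈ s, 0 ≤ g x) {A B : ℝ} (hA : 0 ≤ A) (hB : 0 ≤ B)
    (hfA : 𝔼 x ∈ s, f x ^ m ≤ A ^ m) (hgB : 𝔼 x ∈ s, g x ^ m ≤ B ^ m) :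
    𝔼 x ∈ s, (f x + g x) ^ m ≤ (A + B) ^ m := by
  have hm0 : (0 : ℝ) < m := by positivity
  have hm1 : (1 : ℝ) ≤ m := mod_cast Nat.one_le_iff_ne_zero.2 hm
  have root_le_iff {h : α → ℝ} (hh : ∀ x ∈ s, 0 ≤ h x) {D : ℝ} (hD : 0 ≤ D) :
      (𝔼 x ∈ s, h x ^ (m : ℝ)) ^ (m : ℝ)⁻¹ ≤ D ↔ 𝔼 x ∈ s, h x ^ m ≤ D ^ m := by
    simp only [Real.rpow_natCast]
    rw [Real.rpow_inv_le_iff_of_pos (expect_nonneg fun x hx => pow_nonneg (hh x hx) m) hD hm0,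
      Real.rpow_natCast]
  rw [← root_le_iff (fun x hx => add_nonneg (hf x hx) (hg x hx)) (add_nonneg hA hB)]
  exact (expect_add_rpow_rpow_inv_le hm1 hf hg).trans
    (add_le_add ((root_le_iff hf hA).2 hfA) ((root_le_iff hg hB).2 hgB))

theorem sq_sqrt_expect_sub_sqrt_expect_le (s : Finset α) (f g : α → ℝ) :
    (√(𝔼 x ∈ s, f x ^ 2) - √(𝔼 x ∈ s, g x ^ 2)) ^ 2 ≤ 𝔼 x ∈ s, (f x - g x) ^ 2 := by
  have hcauchy : 𝔼 x ∈ s, f x * g x ≤ √(𝔼 x ∈ s, f x ^ 2) * √(𝔼 x ∈ s, g x ^ 2) := by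
    rw [← Real.sqrt_mul (by positivity)]
    exact Real.le_sqrt_of_sq_le (expect_mul_sq_le_sq_mul_sq s f g)
  have hexpand : 𝔼 x ∈ s, (f x - g x) ^ 2 =
      𝔼 x ∈ s, f x ^ 2 + 𝔼 x ∈ s, g x ^ 2 - 2 * 𝔼 x ∈ s, f x * g x := by
    rw [mul_expect, ← expect_add_distrib, ← expect_sub_distrib]
    exact expect_congr rfl fun x _ => by ring
  rw [hexpand, sub_sq, Real.sq_sqrt (by positivity), Real.sq_sqrt (by positivity)]
  linarith

variable [Fintype α]

theorem expect_eq_dens_mul_expect_of_support {U : Finset α} {f : α → ℝ}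
    (hf : ∀ x ∉ U, f x = 0) : 𝔼 x, f x = U.dens * 𝔼 x ∈ U, f x := by
  have hext : 𝔼 x, f x = 𝔼 x, if x ∈ U then f x else 0 :=
    expect_congr rfl fun x _ => by split_ifs with hx <;> [rfl; exact hf x hx]
  rw [hext, Fintype.expect_ite_mem, NNRat.smul_def]

theorem dens_mul_expect_le_expect {U : Finset α} {f : α → ℝ} (hf : ∀ x, 0 ≤ f x) :
    U.dens * 𝔼 x ∈ U, f x ≤ 𝔼 x, f x := by
  rw [← NNRat.smul_def, ← Fintype.expect_ite_mem]
  exact expect_le_expect fun x _ => by split_ifs <;> [rfl; exact hf x]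

theorem expect_subset_le_exp_mul_of_expect_pow_le {U : Finset α} {f : α → ℝ} {m : ℕ} {s B : ℝ}
    (hm : m ≠ 0) (hU : Real.exp (-(s * m)) ≤ U.dens) (hf : ∀ x, 0 ≤ f x) (hB : 0 ≤ B)
    (hfB : 𝔼 x, f x ^ m ≤ B ^ m) : 𝔼 x ∈ U, f x ≤ Real.exp s * B := by
  have hdens : (0 : ℝ) < U.dens := (Real.exp_pos _).trans_le hU
  have hUne : U.Nonempty := dens_pos.1 (mod_cast hdens)
  refine le_of_pow_le_pow_left₀ hm (by positivity) ?_
  calc (𝔼 x ∈ U, f x) ^ m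
      ≤ 𝔼 x ∈ U, f x ^ m := map_expect_le_of_convexOn (convexOn_pow m) hUne fun x _ => hf x
    _ ≤ (U.dens : ℝ)⁻¹ * B ^ m := by
        rw [le_inv_mul_iff₀ hdens]
        exact (dens_mul_expect_le_expect fun x => pow_nonneg (hf x) m).trans hfB
    _ ≤ Real.exp (s * m) * B ^ m := by
        gcongr
        rw [← inv_inv (Real.exp _), ← Real.exp_neg]
        exact inv_anti₀ (Real.exp_pos _) hU
    _ = (Real.exp s * B) ^ m := by rw [mul_comm s, Real.exp_nat_mul, mul_pow]

end Average

section Entropy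

open Finset Real

variable {α : Type*} [Fintype α]

/-- The entropy `Ent f = 𝔼 (f log f) - 𝔼 f · log 𝔼 f` of a nonnegative function under the uniform
probability on a finite type; `log 0 = 0` supplies the convention `0 log 0 = 0`. -/
noncomputable def uniformEntropy (f : α → ℝ) : ℝ :=
  𝔼 x, f x * log (f x) - (𝔼 x, f x) * log (𝔼 x, f x)

theorem expect_mul_neg_log_dens_le_uniformEntropy {U : Finset α} (hU : U.Nonempty) {f : α → ℝ}
    (hf : ∀ x, 0 ≤ f x) (hfU : ∀ x ∉ U, f x = 0) :
    (𝔼 x, f x) * -log U.dens ≤ uniformEntropy f := by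
  have hdens : (0 : ℝ) < U.dens := mod_cast dens_pos.2 hU
  have hjensen := map_expect_le_of_convexOn convexOn_mul_log hU fun x _ => hf x
  have hlogsupp : ∀ x ∉ U, f x * log (f x) = 0 := fun x hx => by rw [hfU x hx, zero_mul]
  rw [uniformEntropy, expect_eq_dens_mul_expect_of_support hlogsupp,
    expect_eq_dens_mul_expect_of_support hfU]
  set m := 𝔼 x ∈ U, f x
  have hlog : m * log (U.dens * m) = m * log U.dens + m * log m := by
    rcases eq_or_ne m 0 with hm | hm
    · simp [hm]
    · rw [log_mul hdens.ne' hm, mul_add]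
  linear_combination (U.dens : ℝ) * (hjensen + hlog)

end Entropy

section Cube

open Finset Function

theorem expect_bool_pi_eq_expect_update {ι : Type*} [Fintype ι] [DecidableEq ι] (i : ι)
    (f : (ι → Bool) → ℝ) :
    𝔼 x, f x = 𝔼 x, (f (update x i true) + f (update x i false)) / 2 := by
  have flip_involutive : Involutive fun x : ι → Bool => update x i (!x i) := fun x => by simp
  have hflip : 𝔼 x, f x = 𝔼 x, f (update x i (!x i)) :=
    (Fintype.expect_equiv flip_involutive.toPerm _ _ fun _ => rfl).symm
  have hpair (x : ι → Bool) :
      f (update x i true) + f (update x i false) = f x + f (update x i (!x i)) := by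
    have hx := update_eq_self i x
    cases hxi : x i <;> rw [hxi] at hx <;> rw [hx]
    · exact add_comm _ _
    · rfl
  simp only [hpair, ← expect_div, expect_add_distrib, ← hflip]
  ring

theorem expect_bool_pi_fin_succ {n : ℕ} (f : (Fin (n + 1) → Bool) → ℝ) :
    𝔼 x, f x = (𝔼 x, f (Fin.cons true x) + 𝔼 x, f (Fin.cons false x)) / 2 := by
  simp only [Fintype.expect_eq_sum_div_card,
    ← (Fin.consEquiv fun _ : Fin (n + 1) => Bool).sum_comp f, Fintype.sum_prod_type,
    Fintype.sum_bool, Fin.consEquiv, Equiv.coe_fn_mk, Fintype.card_pi_const, Fintype.card_bool]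
  push_cast
  ring

theorem cubeE_eq_expect (n : ℕ) (f : (Fin n → Bool) → ℝ) : cubeE n f = 𝔼 x, f x := by
  simp [cubeE, Fintype.expect_eq_sum_div_card]

end Cube

section LogSobolev

open Finset Real

theorem mul_log_sub_mul_log_le {t m : ℝ} (ht : 0 ≤ t) (hm : 0 < m) :
    t * log t - t * log m ≤ t * (t / m - 1) := by
  rcases ht.eq_or_lt with rfl | ht
  · simp
  · rw [← mul_sub, ← log_div ht.ne' hm.ne']
    exact mul_le_mul_of_nonneg_left (log_le_sub_one_of_pos (by positivity)) ht.le

theorem sq_sub_div_le_sq_sqrt_sub_sqrt {p q : ℝ} (hp : 0 ≤ p) (hq : 0 ≤ q) :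
    (p - q) ^ 2 / (2 * (p + q)) ≤ (√p - √q) ^ 2 := by
  refine div_le_of_le_mul₀ (by positivity) (by positivity) ?_
  calc (p - q) ^ 2 = (√p - √q) ^ 2 * (√p + √q) ^ 2 := by
        rw [← mul_pow, mul_comm, ← sq_sub_sq, sq_sqrt hp, sq_sqrt hq]
    _ ≤ (√p - √q) ^ 2 * (2 * (p + q)) := by
        gcongr
        simpa only [sq_sqrt hp, sq_sqrt hq] using add_sq_le (a := √p) (b := √q)

theorem two_point_entropy_le {p q : ℝ} (hp : 0 ≤ p) (hq : 0 ≤ q) :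
    (p * log p + q * log q) / 2 - (p + q) / 2 * log ((p + q) / 2) ≤ (√p - √q) ^ 2 := by
  rcases (add_nonneg hp hq).eq_or_lt with h0 | hpos
  · obtain ⟨rfl, rfl⟩ : p = 0 ∧ q = 0 := ⟨by linarith, by linarith⟩
    simp
  have hm : 0 < (p + q) / 2 := by positivity
  have hp_tangent := mul_log_sub_mul_log_le hp hm
  have hq_tangent := mul_log_sub_mul_log_le hq hm
  have hvariance : (p * (p / ((p + q) / 2) - 1) + q * (q / ((p + q) / 2) - 1)) / 2 =
      (p - q) ^ 2 / (2 * (p + q)) := by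
    field_simp
    ring
  linarith [sq_sub_div_le_sq_sqrt_sub_sqrt hp hq]

theorem uniformEntropy_fin_succ {n : ℕ} (f : (Fin (n + 1) → Bool) → ℝ) {p q : ℝ}
    (hp : 𝔼 x, f (Fin.cons true x) = p) (hq : 𝔼 x, f (Fin.cons false x) = q) :
    uniformEntropy f =
      (uniformEntropy (fun x => f (Fin.cons true x)) +
        uniformEntropy (fun x => f (Fin.cons false x))) / 2 +
      ((p * log p + q * log q) / 2 - (p + q) / 2 * log ((p + q) / 2)) := by
  simp only [uniformEntropy, expect_bool_pi_fin_succ, hp, hq]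
  ring

theorem expect_gradSq_succ {n : ℕ} (f : (Fin (n + 1) → Bool) → ℝ) :
    𝔼 x, gradSq (n + 1) f x =
      (𝔼 x, gradSq n (fun y => f (Fin.cons true y)) x +
        𝔼 x, gradSq n (fun y => f (Fin.cons false y)) x) / 2 +
      (𝔼 x, (f (Fin.cons true x) - f (Fin.cons false x)) ^ 2) / 4 := by
  have hslice (b : Bool) (x : Fin n → Bool) : gradSq (n + 1) f (Fin.cons b x) =
      ((f (Fin.cons true x) - f (Fin.cons false x)) ^ 2) / 4 +
        gradSq n (fun y => f (Fin.cons b y)) x := by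
    simp only [gradSq, discDeriv, Fin.sum_univ_succ, Fin.update_cons_zero, Fin.cons_update]
    ring
  simp only [expect_bool_pi_fin_succ, hslice, expect_add_distrib, expect_div]
  ring

theorem uniformEntropy_sq_le_four_mul_expect_gradSq {n : ℕ} (f : (Fin n → Bool) → ℝ) :
    uniformEntropy (fun x => f x ^ 2) ≤ 4 * 𝔼 x, gradSq n f x := by
  induction n with
  | zero => simp [uniformEntropy, gradSq]
  | succ n ih =>
    rw [uniformEntropy_fin_succ _ rfl rfl, expect_gradSq_succ]
    have htrue := ih fun x => f (Fin.cons true x)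
    have hfalse := ih fun x => f (Fin.cons false x)
    have htwo := two_point_entropy_le (p := 𝔼 x, f (Fin.cons true x) ^ 2)
      (q := 𝔼 x, f (Fin.cons false x) ^ 2) (by positivity) (by positivity)
    have hminkowski := sq_sqrt_expect_sub_sqrt_expect_le univ
      (fun x => f (Fin.cons true x)) (fun x => f (Fin.cons false x))
    linarith

end LogSobolev

section TwoPointBonami

open Finset

theorem sum_range_two_mul_add_one {M : Type*} [AddCommMonoid M] (f : ℕ → M) (k : ℕ) :
    ∑ m ∈ range (2 * k + 1), f m =
      ∑ j ∈ range (k + 1), f (2 * j) + ∑ j ∈ range k, f (2 * j + 1) := by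
  induction k with
  | zero => simp
  | succ k ih =>
    rw [show 2 * (k + 1) + 1 = 2 * k + 1 + 1 + 1 by ring, sum_range_succ, sum_range_succ, ih,
      sum_range_succ (fun j => f (2 * j)) (k + 1), sum_range_succ (fun j => f (2 * j + 1)) k,
      show 2 * (k + 1) = 2 * k + 1 + 1 by ring]
    abel

theorem add_pow_two_mul_add_sub_pow_two_mul {R : Type*} [CommRing R] (x y : R) (k : ℕ) :
    (x + y) ^ (2 * k) + (x - y) ^ (2 * k) =
      2 * ∑ j ∈ range (k + 1), (y ^ 2) ^ j * (x ^ 2) ^ (k - j) * (2 * k).choose (2 * j) := by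
  rw [add_comm x, sub_eq_neg_add, add_pow, add_pow, sum_range_two_mul_add_one,
    sum_range_two_mul_add_one]
  simp only [pow_succ (-y), pow_succ y (2 * _), (even_two_mul _).neg_pow, mul_neg, neg_mul,
    sum_neg_distrib, pow_mul, ← Nat.mul_sub]
  ring

theorem choose_two_mul_two_mul_le (k j : ℕ) :
    (2 * (k + 1)).choose (2 * j) ≤ (k + 1).choose j * (2 * k + 1) ^ j := by
  induction j with
  | zero => simp
  | succ j ih =>
    have hstep : (2 * (k + 1)).choose (2 * (j + 1)) * (2 * j + 1 + 1) * (2 * j + 1) =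
        (2 * (k + 1)).choose (2 * j) * (2 * (k + 1 - j)) * (2 * (k + 1) - (2 * j + 1)) := by
      rw [show 2 * (j + 1) = 2 * j + 1 + 1 by ring, Nat.choose_succ_right_eq, mul_right_comm,
        Nat.choose_succ_right_eq, Nat.mul_sub 2]
    refine le_of_mul_le_mul_right ?_ (by positivity : 0 < (2 * j + 1 + 1) * (2 * j + 1))
    calc (2 * (k + 1)).choose (2 * (j + 1)) * ((2 * j + 1 + 1) * (2 * j + 1))
        = (2 * (k + 1)).choose (2 * j) * (2 * (k + 1 - j)) * (2 * (k + 1) - (2 * j + 1)) := by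
          rw [← mul_assoc, hstep]
      _ ≤ (k + 1).choose j * (2 * k + 1) ^ j * (2 * (k + 1 - j)) * (2 * k + 1) := by
          gcongr
          omega
      _ = (k + 1).choose j * (k + 1 - j) * (2 * (2 * k + 1) ^ (j + 1)) := by ring
      _ = (k + 1).choose (j + 1) * (2 * k + 1) ^ (j + 1) * (2 * j + 1 + 1) := by
          rw [← Nat.choose_succ_right_eq]
          ring
      _ ≤ (k + 1).choose (j + 1) * (2 * k + 1) ^ (j + 1) * ((2 * j + 1 + 1) * (2 * j + 1)) := by
          gcongr
          exact Nat.le_mul_of_pos_right _ (by omega)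

theorem two_point_bonami (x y : ℝ) (k : ℕ) :
    ((x + y) ^ (2 * (k + 1)) + (x - y) ^ (2 * (k + 1))) / 2 ≤
      (x ^ 2 + (2 * k + 1) * y ^ 2) ^ (k + 1) := by
  rw [add_pow_two_mul_add_sub_pow_two_mul, mul_div_cancel_left₀ _ two_ne_zero,
    add_comm (x ^ 2), add_pow]
  refine sum_le_sum fun j _ => ?_
  have hchoose : ((2 * (k + 1)).choose (2 * j) : ℝ) ≤ (k + 1).choose j * (2 * k + 1) ^ j :=
    mod_cast choose_two_mul_two_mul_le k j
  calc (y ^ 2) ^ j * (x ^ 2) ^ (k + 1 - j) * (2 * (k + 1)).choose (2 * j)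
      ≤ (y ^ 2) ^ j * (x ^ 2) ^ (k + 1 - j) * ((k + 1).choose j * (2 * k + 1) ^ j) := by gcongr
    _ = ((2 * k + 1) * y ^ 2) ^ j * (x ^ 2) ^ (k + 1 - j) * (k + 1).choose j := by
        rw [mul_pow (2 * k + 1 : ℝ)]
        ring

end TwoPointBonami

section Walsh

open Finset Function

variable {ι : Type*}

/-- The multilinear polynomial `∑_{S ⊆ s} a_S ∏_{i ∈ S} x_i` in the variables `x_i`, `i ∈ s`, as a
function on the cube. The variable set `s` is explicit so that one variable at a time can be split
off; coefficients `a S` with `S ⊈ s` are ignored. -/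
noncomputable def walshSum (a : Finset ι → ℝ) (s : Finset ι) (x : ι → Bool) : ℝ :=
  ∑ S ∈ s.powerset, a S * ∏ i ∈ S, cubeSign (x i)

variable [DecidableEq ι] {i : ι} {s : Finset ι}

theorem walshSum_insert (hi : i ∉ s) (a : Finset ι → ℝ) (x : ι → Bool) :
    walshSum a (insert i s) x =
      walshSum a s x + cubeSign (x i) * walshSum (fun S => a (insert i S)) s x := by
  simp only [walshSum, sum_powerset_insert hi, mul_sum]
  congr 1
  refine sum_congr rfl fun S hS => ?_
  rw [prod_insert fun hiS => hi (mem_powerset.1 hS hiS)]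
  ring

theorem walshSum_update_of_notMem (hi : i ∉ s) (a : Finset ι → ℝ) (x : ι → Bool) (b : Bool) :
    walshSum a s (update x i b) = walshSum a s x := by
  refine sum_congr rfl fun S hS => congr_arg _ (prod_congr rfl fun j hj => ?_)
  rw [update_of_ne]
  rintro rfl
  exact hi (mem_powerset.1 hS hj)

theorem walshSum_insert_update_true (hi : i ∉ s) (a : Finset ι → ℝ) (x : ι → Bool) :
    walshSum a (insert i s) (update x i true) =
      walshSum a s x + walshSum (fun S => a (insert i S)) s x := by
  simp [walshSum_insert hi, walshSum_update_of_notMem hi, cubeSign]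

theorem walshSum_insert_update_false (hi : i ∉ s) (a : Finset ι → ℝ) (x : ι → Bool) :
    walshSum a (insert i s) (update x i false) =
      walshSum a s x - walshSum (fun S => a (insert i S)) s x := by
  simp [walshSum_insert hi, walshSum_update_of_notMem hi, cubeSign, sub_eq_add_neg]

theorem expect_walshSum_sq [Fintype ι] (a : Finset ι → ℝ) (s : Finset ι) :
    𝔼 x, walshSum a s x ^ 2 = ∑ S ∈ s.powerset, a S ^ 2 := by
  induction s using Finset.induction_on generalizing a with
  | empty => simp [walshSum]
  | insert i s hi ih =>
    rw [expect_bool_pi_eq_expect_update i, sum_powerset_insert hi, ← ih,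
      ← ih fun S => a (insert i S), ← expect_add_distrib]
    simp only [walshSum_insert_update_true hi, walshSum_insert_update_false hi]
    exact expect_congr rfl fun x _ => by ring

theorem expect_walshSum_pow_le [Fintype ι] (a : Finset ι → ℝ) (s : Finset ι) (k : ℕ) :
    𝔼 x, (walshSum a s x ^ 2) ^ (k + 1) ≤
      (∑ S ∈ s.powerset, (2 * k + 1) ^ #S * a S ^ 2) ^ (k + 1) := by
  induction s using Finset.induction_on generalizing a with
  | empty => simp [walshSum]
  | insert i s hi ih =>
    set b : Finset ι → ℝ := fun S => a (insert i S)
    have hweights : ∑ S ∈ s.powerset, (2 * k + 1 : ℝ) ^ #(insert i S) * a (insert i S) ^ 2 =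
        (2 * k + 1) * ∑ S ∈ s.powerset, (2 * k + 1 : ℝ) ^ #S * b S ^ 2 := by
      rw [mul_sum]
      refine sum_congr rfl fun S hS => ?_
      rw [card_insert_of_notMem fun hiS => hi (mem_powerset.1 hS hiS)]
      ring
    rw [expect_bool_pi_eq_expect_update i, sum_powerset_insert hi, hweights]
    simp only [walshSum_insert_update_true hi, walshSum_insert_update_false hi, ← pow_mul]
    refine (expect_le_expect fun x _ => two_point_bonami _ _ k).trans ?_
    refine expect_add_pow_le_add_pow k.succ_ne_zero (fun _ _ => by positivity)
      (fun _ _ => by positivity) (by positivity) (by positivity) (ih a) ?_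
    simp only [mul_pow (2 * k + 1 : ℝ), ← mul_expect]
    gcongr
    exact ih b

theorem sum_sum_powerset_erase_insert [Fintype ι] {M : Type*} [AddCommMonoid M]
    (g : Finset ι → M) :
    ∑ i, ∑ S ∈ (univ.erase i).powerset, g (insert i S) = ∑ T, #T • g T := by
  have hreindex (i : ι) :
      ∑ S ∈ (univ.erase i).powerset, g (insert i S) = ∑ T with i ∈ T, g T :=
    sum_nbij' (insert i) (erase · i) (by simp) (by simp [subset_erase])
      (fun _ hS => erase_insert (by simpa [subset_erase] using hS))
      (fun _ hT => insert_erase (by simpa using hT)) (by simp)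
  simp only [hreindex, sum_filter]
  rw [sum_comm]
  simp

theorem sum_pow_card_mul_sq_insert_le [Fintype ι] {d : ℕ} {a : Finset ι → ℝ}
    (ha : ∀ S, d < #S → a S = 0) {c : ℝ} (hc : 1 ≤ c) :
    ∑ i, ∑ S ∈ (univ.erase i).powerset, c ^ #S * a (insert i S) ^ 2 ≤
      d * c ^ (d - 1) * ∑ S, a S ^ 2 := by
  have hcard : ∀ i, ∀ S ∈ (univ.erase i).powerset,
      c ^ #S * a (insert i S) ^ 2 = c ^ (#(insert i S) - 1) * a (insert i S) ^ 2 := by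
    intro i S hS
    rw [card_insert_of_notMem fun hiS => notMem_erase i univ (mem_powerset.1 hS hiS),
      Nat.add_sub_cancel]
  rw [sum_congr rfl fun i _ => sum_congr rfl (hcard i),
    sum_sum_powerset_erase_insert fun T => c ^ (#T - 1) * a T ^ 2, mul_sum]
  refine sum_le_sum fun T _ => ?_
  rcases lt_or_ge d #T with hT | hT
  · simp [ha T hT]
  · rw [nsmul_eq_mul, ← mul_assoc]
    gcongr

end Walsh

section Gradient

open Finset Function

variable {n : ℕ}

theorem discDeriv_walshSum (a : Finset (Fin n) → ℝ) (i : Fin n) (x : Fin n → Bool) :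
    discDeriv n (walshSum a univ) i x = walshSum (fun S => a (insert i S)) (univ.erase i) x := by
  have hi : i ∉ (univ : Finset (Fin n)).erase i := notMem_erase i univ
  rw [discDeriv, ← insert_erase (mem_univ i), walshSum_insert_update_true hi,
    walshSum_insert_update_false hi, insert_erase (mem_univ i)]
  ring

theorem expect_subset_gradSq_le {d k : ℕ} {P : (Fin n → Bool) → ℝ} (hP : IsPolyDeg n d P) {s : ℝ}
    {U : Finset (Fin n → Bool)} (hU : Real.exp (-(s * (k + 1))) ≤ U.dens) :
    𝔼 x ∈ U, gradSq n P x ≤ Real.exp s * (d * (2 * k + 1) ^ (d - 1) * 𝔼 x, P x ^ 2) := by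
  obtain ⟨a, ha, hPa⟩ := hP
  obtain rfl : P = walshSum a univ := funext fun x => by simp [hPa, walshSum]
  have hderiv (i : Fin n) : 𝔼 x ∈ U, discDeriv n (walshSum a univ) i x ^ 2 ≤
      Real.exp s * ∑ S ∈ (univ.erase i).powerset, (2 * k + 1) ^ #S * a (insert i S) ^ 2 := by
    simp only [discDeriv_walshSum]
    exact expect_subset_le_exp_mul_of_expect_pow_le k.succ_ne_zero (mod_cast hU)
      (fun x => sq_nonneg _) (by positivity) (expect_walshSum_pow_le _ _ k)
  calc 𝔼 x ∈ U, gradSq n (walshSum a univ) x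
      = ∑ i, 𝔼 x ∈ U, discDeriv n (walshSum a univ) i x ^ 2 := by
        simp only [gradSq, expect_sum_comm]
    _ ≤ Real.exp s * ∑ i, ∑ S ∈ (univ.erase i).powerset,
          (2 * k + 1) ^ #S * a (insert i S) ^ 2 := by
        rw [mul_sum]
        exact sum_le_sum fun i _ => hderiv i
    _ ≤ Real.exp s * (d * (2 * k + 1) ^ (d - 1) * 𝔼 x, walshSum a univ x ^ 2) := by
        rw [expect_walshSum_sq, powerset_univ]
        gcongr
        exact sum_pow_card_mul_sq_insert_le ha (by norm_cast; omega)

theorem expect_discDeriv_sq_le_of_abs_sub_le {f g : (Fin n → Bool) → ℝ}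
    {U : Finset (Fin n → Bool)} (hfg : ∀ x y, |f x - f y| ≤ |g x - g y|)
    (hfU : ∀ x ∉ U, f x = 0) (i : Fin n) :
    𝔼 x, discDeriv n f i x ^ 2 ≤ 2 * (U.dens * 𝔼 x ∈ U, discDeriv n g i x ^ 2) := by
  rw [← NNRat.smul_def, ← Fintype.expect_ite_mem, expect_bool_pi_eq_expect_update i,
    expect_bool_pi_eq_expect_update i (fun x => if x ∈ U then _ else _), mul_expect]
  refine expect_le_expect fun x _ => ?_
  simp only [discDeriv, update_idem]
  set x₁ := update x i true
  set x₀ := update x i false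
  have hsq : ((f x₁ - f x₀) / 2) ^ 2 ≤ ((g x₁ - g x₀) / 2) ^ 2 := by
    simpa only [div_pow] using div_le_div_of_nonneg_right (sq_le_sq.2 (hfg x₁ x₀)) (by norm_num)
  have hg := sq_nonneg ((g x₁ - g x₀) / 2)
  by_cases h₁ : x₁ ∈ U <;> by_cases h₀ : x₀ ∈ U <;> simp only [h₁, h₀, if_true, if_false]
  · linarith
  · linarith
  · linarith
  · simp [hfU x₁ h₁, hfU x₀ h₀]

theorem expect_gradSq_le_of_abs_sub_le {f g : (Fin n → Bool) → ℝ} {U : Finset (Fin n → Bool)}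
    (hfg : ∀ x y, |f x - f y| ≤ |g x - g y|) (hfU : ∀ x ∉ U, f x = 0) :
    𝔼 x, gradSq n f x ≤ 2 * (U.dens * 𝔼 x ∈ U, gradSq n g x) := by
  simp only [gradSq, expect_sum_comm, mul_sum]
  exact sum_le_sum fun i _ => expect_discDeriv_sq_le_of_abs_sub_le hfg hfU i

end Gradient

section Truncation

open Finset Real

theorem expect_sq_mul_neg_log_dens_le {n : ℕ} {f g : (Fin n → Bool) → ℝ}
    {U : Finset (Fin n → Bool)} (hU : U.Nonempty) (hfg : ∀ x y, |f x - f y| ≤ |g x - g y|)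
    (hfU : ∀ x ∉ U, f x = 0) :
    (𝔼 x, f x ^ 2) * -log U.dens ≤ 8 * (U.dens * 𝔼 x ∈ U, gradSq n g x) := by
  have hentropy := expect_mul_neg_log_dens_le_uniformEntropy hU (fun x => sq_nonneg (f x))
    fun x hx => by rw [hfU x hx, zero_pow two_ne_zero]
  have hlogSobolev := uniformEntropy_sq_le_four_mul_expect_gradSq f
  have hgrad := expect_gradSq_le_of_abs_sub_le hfg hfU
  linarith

theorem natCast_mul_two_mul_floor_add_one_pow_le (d : ℕ) {y : ℝ} (hy : 0 ≤ y) :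
    d * (2 * ⌊y⌋₊ + 1 : ℝ) ^ (d - 1) ≤ 6 ^ (d - 1) * max 1 (y ^ (d - 1)) := by
  have hd : (d : ℝ) ≤ 2 ^ (d - 1) := by
    have := (d - 1).lt_two_pow_self
    exact_mod_cast (by omega : d ≤ 2 ^ (d - 1))
  have hfloor : (2 * ⌊y⌋₊ + 1 : ℝ) ≤ 3 * max 1 y := by
    linarith [Nat.floor_le hy, le_max_left 1 y, le_max_right 1 y]
  have hmax : max 1 y ^ (d - 1) = max 1 (y ^ (d - 1)) := by
    rw [pow_left_monotoneOn.map_max zero_le_one hy, one_pow]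
  calc d * (2 * ⌊y⌋₊ + 1 : ℝ) ^ (d - 1)
      ≤ 2 ^ (d - 1) * (3 * max 1 y) ^ (d - 1) := by gcongr
    _ = 6 ^ (d - 1) * max 1 (y ^ (d - 1)) := by
        rw [mul_pow, ← mul_assoc, ← mul_pow, hmax]
        norm_num

theorem expect_subset_gradSq_le_max {n d : ℕ} (hd : 1 ≤ d) {P : (Fin n → Bool) → ℝ}
    (hP : IsPolyDeg n d P) {L : ℝ} (hL : 0 ≤ L) {U : Finset (Fin n → Bool)}
    (hU : exp (-L) ≤ U.dens) :
    𝔼 x ∈ U, gradSq n P x ≤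
      exp d * (6 ^ (d - 1) * max 1 ((L / d) ^ (d - 1)) * 𝔼 x, P x ^ 2) := by
  have hL_le : L ≤ d * (⌊L / d⌋₊ + 1) :=
    (div_le_iff₀' (mod_cast hd)).1 (Nat.lt_floor_add_one (L / d)).le
  refine (expect_subset_gradSq_le hP ((exp_le_exp.2 (neg_le_neg hL_le)).trans hU)).trans ?_
  gcongr exp d * (?_ * _)
  exact natCast_mul_two_mul_floor_add_one_pow_le d (by positivity)

theorem eight_mul_exp_mul_six_pow_le {d : ℕ} (hd : 1 ≤ d) :
    8 * (exp d * 6 ^ (d - 1)) ≤ (8 * exp 1) ^ d := by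
  calc 8 * (exp d * 6 ^ (d - 1)) ≤ 8 * (exp d * 8 ^ (d - 1)) := by gcongr; norm_num
    _ = (8 * exp 1) ^ d := by
        rw [mul_pow, ← exp_nat_mul, mul_one, mul_left_comm, mul_pow_sub_one (by omega), mul_comm]

end Truncation

theorem truncated_entropy_estimate_general {n d : ℕ} (hd : 1 ≤ d) {P : (Fin n → Bool) → ℝ}
    (hP : IsPolyDeg n d P) (t : ℝ) :
    (𝔼 x, max (P x - t) 0 ^ 2) * |Real.log (Finset.univ.filter fun x => t < P x).dens| ≤
      (Finset.univ.filter fun x => t < P x).dens * (8 * Real.exp 1) ^ d *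
        max 1 ((|Real.log (Finset.univ.filter fun x => t < P x).dens| / d) ^ (d - 1)) *
        𝔼 x, P x ^ 2 := by
  set U := Finset.univ.filter fun x => t < P x with hUdef
  rcases U.eq_empty_or_nonempty with hU | hU
  · simp [hU]
  have hdens : (0 : ℝ) < U.dens := mod_cast Finset.dens_pos.2 hU
  have hdens_le : (U.dens : ℝ) ≤ 1 := mod_cast U.dens_le_one
  have hlog : |Real.log U.dens| = -Real.log U.dens :=
    abs_of_nonpos (Real.log_nonpos hdens.le hdens_le)
  have hcontract (x y : Fin n → Bool) :
      |max (P x - t) 0 - max (P y - t) 0| ≤ |P x - P y| := by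
    simpa using abs_max_sub_max_le_abs (P x - t) (P y - t) 0
  have hsupport : ∀ x ∉ U, max (P x - t) 0 = 0 := fun x hx => by simpa [hUdef] using hx
  calc (𝔼 x, max (P x - t) 0 ^ 2) * |Real.log U.dens|
      ≤ 8 * (U.dens * 𝔼 x ∈ U, gradSq n P x) := by
        rw [hlog]
        exact expect_sq_mul_neg_log_dens_le hU hcontract hsupport
    _ ≤ 8 * (U.dens * (Real.exp d * (6 ^ (d - 1) *
          max 1 ((|Real.log U.dens| / d) ^ (d - 1)) * 𝔼 x, P x ^ 2))) := by
        gcongr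
        exact expect_subset_gradSq_le_max hd hP (abs_nonneg _)
          (by rw [hlog, neg_neg, Real.exp_log hdens])
    _ = U.dens * (8 * (Real.exp d * 6 ^ (d - 1))) *
          max 1 ((|Real.log U.dens| / d) ^ (d - 1)) * 𝔼 x, P x ^ 2 := by ring
    _ ≤ U.dens * (8 * Real.exp 1) ^ d *
          max 1 ((|Real.log U.dens| / d) ^ (d - 1)) * 𝔼 x, P x ^ 2 := by
        gcongr
        exact eight_mul_exp_mul_six_pow_le hd

/-- Key estimate in the proof of the local tail bound: with
`U = {P > a_r}`, `ε = #U/2^n` and `h = max(P - a_r, 0)`,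
`E h² · |log ε| ≤ ε C^d max{1, (|log ε|/d)^{d-1}} · E|P(X)|²`. -/
theorem truncated_entropy_estimate :
    ∃ C : ℝ, 0 < C ∧
      ∀ (n d : ℕ), 1 ≤ n → 1 ≤ d →
        ∀ P : (Fin n → Bool) → ℝ, IsPolyDeg n d P →
          ∀ r : ℝ, 1 ≤ r →
            ∀ ar ar1 : ℝ, IsQuantile n P r ar → IsQuantile n P (r + 1) ar1 →
              ar < ar1 →
                cubeE n (fun x => (max (P x - ar) 0) ^ 2) *
                    |Real.log
                      (((Finset.univ.filter fun x : Fin n → Bool => ar < P x).card : ℝ) /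
                        2 ^ n)| ≤
                  (((Finset.univ.filter fun x : Fin n → Bool => ar < P x).card : ℝ) / 2 ^ n) *
                    C ^ d *
                    max 1
                      ((|Real.log
                            (((Finset.univ.filter fun x : Fin n → Bool => ar < P x).card : ℝ) /
                              2 ^ n)| / (d : ℝ)) ^ (d - 1)) *
                    cubeE n (fun x => (P x) ^ 2) := by
  refine ⟨8 * Real.exp 1, by positivity, fun n d _ hd P hP _ _ ar _ _ _ _ => ?_⟩
  simpa [cubeE_eq_expect, Finset.nnratCast_dens] using truncated_entropy_estimate_general hd hP ar
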